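/- Let D ⊆ ℝ² be a bounded measurable set, let κ1, κ2 > 0, and for a 2π-periodic function θ define Φ(θ) = κ1·1_{A(θ)} + κ2 (restricted to D). For every M > 0 there exists a constant C > 0, depending only on M and κ1, such that for all continuously differentiable 2π-periodic functions θ1, θ2 : ℝ → ℝ with sup|θi| + sup|θi'| ≤ M for i = 1,2, one has ‖Φ(θ1) − Φ(θ2)‖_{L²(D)} ≤ C·(sup_{ϑ}|θ1(ϑ) − θ2(ϑ)|)^{1/2}. -/

import Mathlib

open Set Real MeasureTheory

/-- The direction vector `v(ϑ) = (cos ϑ, sin ϑ)`. -/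
noncomputable def vdir (ϑ : ℝ) : ℝ × ℝ := (Real.cos ϑ, Real.sin ϑ)

/-- The star-shaped set `A(θ) = {s·exp(θ(ϑ))·v(ϑ) : 0 ≤ s ≤ 1, 0 ≤ ϑ ≤ 2π}` centered
at the origin. -/
noncomputable def starSet (θ : ℝ → ℝ) : Set (ℝ × ℝ) :=
  {p : ℝ × ℝ | ∃ s ∈ Set.Icc (0 : ℝ) 1, ∃ ϑ ∈ Set.Icc (0 : ℝ) (2 * π),
    p = (s * Real.exp (θ ϑ)) • vdir ϑ}

/-- The star-shaped inclusion parametrization `Φ(θ)(x) = κ1·1_{A(θ)}(x) + κ2`. -/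
noncomputable def phiStar (κ1 κ2 : ℝ) (θ : ℝ → ℝ) (x : ℝ × ℝ) : ℝ :=
  κ1 * Set.indicator (starSet θ) (fun _ => (1 : ℝ)) x + κ2

open scoped Pointwise

theorem isCompact_starSet {θ : ℝ → ℝ} (hθ : Continuous θ) : IsCompact (starSet θ) := by
  have himage : starSet θ = (fun q : ℝ × ℝ => (q.1 * Real.exp (θ q.2)) • vdir q.2) ''
      (Icc (0 : ℝ) 1 ×ˢ Icc (0 : ℝ) (2 * π)) := by
    ext p
    constructor
    · rintro ⟨s, hs, t, ht, rfl⟩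
      exact ⟨(s, t), ⟨hs, ht⟩, rfl⟩
    · rintro ⟨⟨s, t⟩, ⟨hs, ht⟩, rfl⟩
      exact ⟨s, hs, t, ht, rfl⟩
  rw [himage]
  refine (isCompact_Icc.prod isCompact_Icc).image ?_
  unfold vdir
  fun_prop

theorem starSet_subset_exp_smul {θ η : ℝ → ℝ} {δ : ℝ} (h : ∀ t, θ t ≤ η t + δ) :
    starSet θ ⊆ Real.exp δ • starSet η := by
  rintro p ⟨s, hs, t, ht, rfl⟩
  refine mem_smul_set.2 ⟨(s * Real.exp (θ t - η t - δ) * Real.exp (η t)) • vdir t,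
    ⟨s * Real.exp (θ t - η t - δ), ⟨mul_nonneg hs.1 (Real.exp_pos _).le, ?_⟩, t, ht, rfl⟩, ?_⟩
  · exact mul_le_one₀ hs.2 (Real.exp_pos _).le (Real.exp_le_one_iff.2 (by linarith [h t]))
  · rw [smul_smul]
    congr 1
    rw [mul_comm, mul_assoc, mul_assoc, ← Real.exp_add, ← Real.exp_add]
    ring_nf

theorem volume_real_starSet_le {θ : ℝ → ℝ} {M : ℝ} (h : ∀ t, θ t ≤ M) :
    volume.real (starSet θ) ≤ 4 * Real.exp (2 * M) := by
  set R := Real.exp M with hR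
  have hR0 : 0 < R := Real.exp_pos M
  have hsub : starSet θ ⊆ Icc (-R) R ×ˢ Icc (-R) R := by
    rintro p ⟨s, hs, t, -, rfl⟩
    have hr : |s * Real.exp (θ t)| ≤ R := by
      rw [abs_of_nonneg (mul_nonneg hs.1 (Real.exp_pos _).le)]
      exact (mul_le_of_le_one_left (Real.exp_pos _).le hs.2).trans (Real.exp_le_exp.2 (h t))
    have hmul : ∀ c : ℝ, |c| ≤ 1 → |s * Real.exp (θ t) * c| ≤ R := fun c hc => by
      rw [abs_mul]
      exact (mul_le_of_le_one_right (abs_nonneg _) hc).trans hr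
    exact ⟨abs_le.1 (hmul _ (Real.abs_cos_le_one t)), abs_le.1 (hmul _ (Real.abs_sin_le_one t))⟩
  have hbox : volume.real (Icc (-R) R ×ˢ Icc (-R) R) = 4 * Real.exp (2 * M) := by
    rw [Measure.volume_eq_prod, measureReal_prod_prod, Real.volume_real_Icc_of_le (by linarith),
      two_mul M, Real.exp_add, ← hR]
    ring
  rw [← hbox]
  exact measureReal_mono hsub (isCompact_Icc.prod isCompact_Icc).measure_lt_top.ne

theorem volume_real_starSet_diff_le {θ η : ℝ → ℝ} {δ M : ℝ} (hη : Continuous η) (hδ : 0 ≤ δ)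
    (h : ∀ t, θ t ≤ η t + δ) (hM : ∀ t, η t ≤ M) :
    volume.real (starSet θ \ starSet η) ≤ (Real.exp (2 * δ) - 1) * (4 * Real.exp (2 * M)) := by
  have hcompact := isCompact_starSet hη
  have hsmul_fin := (hcompact.smul (Real.exp δ)).measure_lt_top (μ := volume)
  calc volume.real (starSet θ \ starSet η)
      ≤ volume.real (Real.exp δ • starSet η \ starSet η) :=
        measureReal_mono (sdiff_subset_sdiff_left (starSet_subset_exp_smul h))
          ((measure_mono sdiff_subset).trans_lt hsmul_fin).ne
    _ = volume.real (Real.exp δ • starSet η) - volume.real (starSet η) :=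
        measureReal_sdiff (starSet_subset_exp_smul fun t => by linarith)
          hcompact.measurableSet hsmul_fin.ne
    _ = (Real.exp (2 * δ) - 1) * volume.real (starSet η) := by
        rw [measureReal_def, Measure.addHaar_smul, ENNReal.toReal_mul, ← measureReal_def,
          Module.finrank_prod, Module.finrank_self, ENNReal.toReal_ofReal (abs_nonneg _),
          abs_of_nonneg (by positivity), two_mul δ, Real.exp_add]
        ring
    _ ≤ _ := mul_le_mul_of_nonneg_left (volume_real_starSet_le hM)
        (by linarith [Real.add_one_le_exp (2 * δ)])

theorem volume_real_symmDiff_starSet_le {θ η : ℝ → ℝ} {δ M : ℝ} (hθ : Continuous θ)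
    (hη : Continuous η) (hδ : 0 ≤ δ) (h : ∀ t, |θ t - η t| ≤ δ) (hθM : ∀ t, θ t ≤ M)
    (hηM : ∀ t, η t ≤ M) :
    volume.real (symmDiff (starSet θ) (starSet η)) ≤
      (Real.exp (2 * δ) - 1) * (8 * Real.exp (2 * M)) := by
  have h₁ := volume_real_starSet_diff_le hη hδ
    (fun t => by linarith [(abs_le.1 (h t)).2]) hηM (θ := θ)
  have h₂ := volume_real_starSet_diff_le hθ hδ
    (fun t => by linarith [(abs_le.1 (h t)).1]) hθM (θ := η)
  have hunion := measureReal_union_le (μ := volume) (starSet θ \ starSet η) (starSet η \ starSet θ)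
  rw [Set.symmDiff_def]
  linarith

theorem exp_sub_one_le_mul_exp (x : ℝ) : Real.exp x - 1 ≤ x * Real.exp x := by
  have h := mul_le_mul_of_nonneg_right (Real.add_one_le_exp (-x)) (Real.exp_pos x).le
  rw [← Real.exp_add, neg_add_cancel, Real.exp_zero] at h
  linarith

theorem phiStar_sub_sq (κ1 κ2 : ℝ) (θ η : ℝ → ℝ) :
    (fun x => (phiStar κ1 κ2 θ x - phiStar κ1 κ2 η x) ^ 2) =
      (symmDiff (starSet θ) (starSet η)).indicator fun _ => κ1 ^ 2 := by
  funext x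
  by_cases h₁ : x ∈ starSet θ <;> by_cases h₂ : x ∈ starSet η <;>
    simp [phiStar, h₁, h₂, Set.mem_symmDiff]

theorem setIntegral_phiStar_sub_sq_le (κ1 κ2 : ℝ) {θ η : ℝ → ℝ} (hθ : Continuous θ)
    (hη : Continuous η) (D : Set (ℝ × ℝ)) :
    ∫ x in D, (phiStar κ1 κ2 θ x - phiStar κ1 κ2 η x) ^ 2 ≤
      κ1 ^ 2 * volume.real (symmDiff (starSet θ) (starSet η)) := by
  have hθc := isCompact_starSet hθ
  have hηc := isCompact_starSet hη
  have hmeas := hθc.measurableSet.symmDiff hηc.measurableSet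
  have hfin : volume (symmDiff (starSet θ) (starSet η)) ≠ ⊤ :=
    ((measure_mono symmDiff_subset_union).trans_lt (hθc.union hηc).measure_lt_top).ne
  rw [phiStar_sub_sq, integral_indicator_const _ hmeas, smul_eq_mul, mul_comm]
  exact mul_le_mul_of_nonneg_left
    (ENNReal.toReal_mono hfin (Measure.restrict_apply_le D _)) (sq_nonneg κ1)

theorem bddAbove_range_abs_of_periodic {f : ℝ → ℝ} {c : ℝ} (hf : Continuous f) (hc : c ≠ 0)
    (hp : Function.Periodic f c) : BddAbove (range fun x => |f x|) :=
  (Function.Periodic.compact_of_continuous (f := fun x => |f x|) (fun x => by simp only [hp x])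
    hc hf.abs).bddAbove

/-- Conditional `1/2`-Hölder continuity of the star-shaped set parametrization: for every
`M > 0` there is `C > 0` depending only on `M` and `κ1` such that for all bounded
measurable `D ⊆ ℝ²` and all `C¹` `2π`-periodic `θ1, θ2` with `sup|θᵢ| + sup|θᵢ'| ≤ M`,
`‖Φ(θ1) − Φ(θ2)‖_{L²(D)} ≤ C·(sup_ϑ |θ1 ϑ − θ2 ϑ|)^{1/2}`. -/
theorem stmt2 (κ1 κ2 : ℝ) (hκ1 : 0 < κ1) (hκ2 : 0 < κ2) (M : ℝ) (hM : 0 < M) :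
    ∃ C : ℝ, 0 < C ∧
      ∀ D : Set (ℝ × ℝ), MeasurableSet D → Bornology.IsBounded D →
      ∀ θ1 θ2 : ℝ → ℝ,
        ContDiff ℝ 1 θ1 → ContDiff ℝ 1 θ2 →
        Function.Periodic θ1 (2 * π) → Function.Periodic θ2 (2 * π) →
        (⨆ x, |θ1 x|) + (⨆ x, |deriv θ1 x|) ≤ M →
        (⨆ x, |θ2 x|) + (⨆ x, |deriv θ2 x|) ≤ M →
        Real.sqrt (∫ x in D, (phiStar κ1 κ2 θ1 x - phiStar κ1 κ2 θ2 x) ^ 2) ≤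
          C * Real.sqrt (⨆ ϑ, |θ1 ϑ - θ2 ϑ|) := by
  refine ⟨4 * κ1 * Real.exp (3 * M), by positivity, ?_⟩
  intro D _ _ θ1 θ2 h1 h2 hp1 hp2 hM1 hM2
  have hpi : (2 * π) ≠ 0 := by positivity
  have hbound : ∀ θ : ℝ → ℝ, ContDiff ℝ 1 θ → Function.Periodic θ (2 * π) →
      (⨆ x, |θ x|) + (⨆ x, |deriv θ x|) ≤ M → ∀ t, |θ t| ≤ M := fun θ h hp hsum t => by
    have hle := le_ciSup (bddAbove_range_abs_of_periodic h.continuous hpi hp) t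
    have hnonneg := Real.iSup_nonneg fun x => abs_nonneg (deriv θ x)
    linarith
  have hb1 := hbound θ1 h1 hp1 hM1
  have hb2 := hbound θ2 h2 hp2 hM2
  set δ := ⨆ t, |θ1 t - θ2 t| with hδ
  have hδ0 : 0 ≤ δ := Real.iSup_nonneg fun t => abs_nonneg _
  have hδM : δ ≤ 2 * M := ciSup_le fun t =>
    (abs_sub _ _).trans (by linarith [hb1 t, hb2 t])
  have hle : ∀ t, |θ1 t - θ2 t| ≤ δ := fun t =>
    le_ciSup (bddAbove_range_abs_of_periodic (f := fun t => θ1 t - θ2 t)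
      (h1.continuous.sub h2.continuous) hpi (hp1.sub hp2)) t
  have hexp : Real.exp (2 * δ) - 1 ≤ 2 * δ * Real.exp (4 * M) :=
    (exp_sub_one_le_mul_exp _).trans <| mul_le_mul_of_nonneg_left
      (Real.exp_le_exp.2 (by linarith)) (by positivity)
  have hvol := volume_real_symmDiff_starSet_le h1.continuous h2.continuous hδ0 hle
    (fun t => (le_abs_self _).trans (hb1 t)) (fun t => (le_abs_self _).trans (hb2 t))
  rw [Real.sqrt_le_left (by positivity), mul_pow, Real.sq_sqrt hδ0]
  calc ∫ x in D, (phiStar κ1 κ2 θ1 x - phiStar κ1 κ2 θ2 x) ^ 2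
      ≤ κ1 ^ 2 * volume.real (symmDiff (starSet θ1) (starSet θ2)) :=
        setIntegral_phiStar_sub_sq_le κ1 κ2 h1.continuous h2.continuous D
    _ ≤ κ1 ^ 2 * (2 * δ * Real.exp (4 * M) * (8 * Real.exp (2 * M))) := by
        refine mul_le_mul_of_nonneg_left (hvol.trans ?_) (sq_nonneg κ1)
        exact mul_le_mul_of_nonneg_right hexp (by positivity)
    _ = (4 * κ1 * Real.exp (3 * M)) ^ 2 * δ := by
        have hpow : Real.exp (3 * M) ^ 2 = Real.exp (4 * M) * Real.exp (2 * M) := by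
          rw [← Real.exp_add, ← Real.exp_nat_mul]
          ring_nf
        rw [mul_pow, hpow]
        ring
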